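/- arXiv:1510.05274 — 2 statements merged into one kernel-verified Lean document; each statement's English description precedes it below -/
import Mathlib

section
/- Let α₀ > 0 and β₀ > 0, and let λ > 0. Then the infimum M_λ = inf{ I(f,g) : (f,g) ∈ H¹(ℝ)×H¹(ℝ), ∫_ℝ f(x)² g(x) dx = λ } satisfies 0 < M_λ < ∞. -/
/-!
Split `I(f,g) = E_{α₀}(f) + E_{β₀}(g)` with `E_a(h) = ∫ (h'² + a h²)`. Since `h²` vanishes at `-∞`,
`κ h(x)² = ∫_{-∞}^x 2κ h h' ≤ ∫ (h'² + κ² h²)`, so `√β₀ g² ≤ E_{β₀}(g)` pointwise, while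
`α₀ ∫ f² ≤ E_{α₀}(f)`. Hence `(∫ f² g)² ≤ (sup g²) (∫ f²)²` gives `α₀² √β₀ λ² ≤ I(f,g)³`, a bound
with the exponent dictated by the scaling `M_λ = λ^{2/3} M_1`. Multiples of a Gaussian satisfy the
constraint, so the infimum is not taken over the empty set.
-/

open MeasureTheory Filter Topology

noncomputable section

/-- Membership in `H¹(ℝ)`: `f` is differentiable with `f` and `f'` square-integrable. -/
def InH1 (f : ℝ → ℝ) : Prop :=
  Differentiable ℝ f ∧ Integrable (fun x => f x ^ 2) ∧ Integrable (fun x => deriv f x ^ 2)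

/-- The functional `I(f,g) = ∫ (f'² + g'² + α₀ f² + β₀ g²)`. -/
def Ifun (α₀ β₀ : ℝ) (f g : ℝ → ℝ) : ℝ :=
  ∫ x : ℝ, (deriv f x ^ 2 + deriv g x ^ 2 + α₀ * f x ^ 2 + β₀ * g x ^ 2)

/-- The set of values `I(f,g)` over pairs in `H¹ × H¹` with `∫ f² g = lam`. -/
def IvalSet (α₀ β₀ lam : ℝ) : Set ℝ :=
  {m | ∃ f g : ℝ → ℝ, InH1 f ∧ InH1 g ∧ (∫ x : ℝ, f x ^ 2 * g x) = lam ∧ Ifun α₀ β₀ f g = m}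

/-- `M_lam`, the infimum of `I` subject to the constraint `∫ f² g = lam`. -/
def Mfun (α₀ β₀ lam : ℝ) : ℝ := sInf (IvalSet α₀ β₀ lam)

/-- The quadratic energy `∫ (h'² + a h²)` of a single function; `I(f,g)` is the sum of the energies
of `f` and `g` with weights `α₀` and `β₀`. Meaningful only when the integrand is integrable, as it
is for `h ∈ H¹(ℝ)`. -/
def energy (a : ℝ) (h : ℝ → ℝ) : ℝ :=
  ∫ x : ℝ, (deriv h x ^ 2 + a * h x ^ 2)

theorem sq_integral_mul_le_of_sq_le {X : Type*} [MeasurableSpace X] {μ : Measure X} {φ g : X → ℝ}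
    {S : ℝ} (hφ : Integrable φ μ) (hg : ∀ᵐ x ∂μ, g x ^ 2 ≤ S) :
    (∫ x, φ x * g x ∂μ) ^ 2 ≤ S * (∫ x, |φ x| ∂μ) ^ 2 := by
  rcases eq_zero_or_neZero μ with rfl | _
  · simp
  obtain ⟨x₀, hx₀⟩ := hg.exists
  have hS : 0 ≤ S := (sq_nonneg (g x₀)).trans hx₀
  have hbound : ‖∫ x, φ x * g x ∂μ‖ ≤ ∫ x, √S * |φ x| ∂μ := by
    refine norm_integral_le_of_norm_le (hφ.abs.const_mul (√S)) ?_
    filter_upwards [hg] with x hx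
    rw [norm_mul, mul_comm]
    exact mul_le_mul_of_nonneg_right (Real.abs_le_sqrt hx) (abs_nonneg _)
  calc (∫ x, φ x * g x ∂μ) ^ 2
      ≤ (∫ x, √S * |φ x| ∂μ) ^ 2 := sq_le_sq.2 (hbound.trans (le_abs_self _))
    _ = S * (∫ x, |φ x| ∂μ) ^ 2 := by rw [integral_const_mul, mul_pow, Real.sq_sqrt hS]

theorem energy_nonneg {a : ℝ} (ha : 0 ≤ a) (h : ℝ → ℝ) : 0 ≤ energy a h :=
  integral_nonneg fun x => by positivity

namespace InH1

variable {f g h : ℝ → ℝ}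

theorem const_mul (hh : InH1 h) (c : ℝ) : InH1 fun x => c * h x := by
  refine ⟨hh.1.const_mul c, ?_, ?_⟩
  · simpa only [mul_pow] using hh.2.1.const_mul (c ^ 2)
  · simpa only [deriv_const_mul_field, mul_pow] using hh.2.2.const_mul (c ^ 2)

theorem integrable_energy (hh : InH1 h) (a : ℝ) :
    Integrable fun x => deriv h x ^ 2 + a * h x ^ 2 :=
  hh.2.2.add (hh.2.1.const_mul a)

theorem integrable_mul_deriv (hh : InH1 h) : Integrable fun x => h x * deriv h x :=
  MemLp.integrable_mul
    ((memLp_two_iff_integrable_sq hh.1.continuous.aestronglyMeasurable).2 hh.2.1)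
    ((memLp_two_iff_integrable_sq (measurable_deriv h).aestronglyMeasurable).2 hh.2.2)

theorem sq_eq_integral_Iic (hh : InH1 h) (x : ℝ) :
    h x ^ 2 = ∫ y in Set.Iic x, 2 * (h y * deriv h y) := by
  have hderiv : ∀ y ∈ Set.Iic x, HasDerivAt (fun y => h y ^ 2) (2 * (h y * deriv h y)) y :=
    fun y _ => by simpa [mul_assoc] using (hh.1 y).hasDerivAt.fun_pow 2
  have hint : IntegrableOn (fun y => 2 * (h y * deriv h y)) (Set.Iic x) :=
    (hh.integrable_mul_deriv.const_mul 2).integrableOn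
  have hlim : Tendsto (fun y => h y ^ 2) atBot (𝓝 0) :=
    tendsto_zero_of_hasDerivAt_of_integrableOn_Iic hderiv hint hh.2.1.integrableOn
  rw [integral_Iic_of_hasDerivAt_of_tendsto' hderiv hint hlim, sub_zero]

theorem mul_sq_le_energy_sq (hh : InH1 h) (κ x : ℝ) : κ * h x ^ 2 ≤ energy (κ ^ 2) h := by
  have hint := hh.integrable_energy (κ ^ 2)
  calc κ * h x ^ 2
      = ∫ y in Set.Iic x, κ * (2 * (h y * deriv h y)) := by
        rw [integral_const_mul, ← hh.sq_eq_integral_Iic]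
    _ ≤ ∫ y in Set.Iic x, (deriv h y ^ 2 + κ ^ 2 * h y ^ 2) :=
        setIntegral_mono ((hh.integrable_mul_deriv.const_mul 2).const_mul κ).integrableOn
          hint.integrableOn fun y => by linarith [sq_nonneg (deriv h y - κ * h y)]
    _ ≤ energy (κ ^ 2) h :=
        setIntegral_le_integral hint (ae_of_all _ fun y => by positivity)

theorem sqrt_mul_sq_le_energy {a : ℝ} (hh : InH1 h) (ha : 0 ≤ a) (x : ℝ) :
    √a * h x ^ 2 ≤ energy a h := by
  simpa only [Real.sq_sqrt ha] using hh.mul_sq_le_energy_sq √a x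

theorem mul_integral_sq_le_energy (hh : InH1 h) (a : ℝ) : a * ∫ x, h x ^ 2 ≤ energy a h := by
  rw [← integral_const_mul]
  exact integral_mono (hh.2.1.const_mul a) (hh.integrable_energy a)
    fun x => le_add_of_nonneg_left (sq_nonneg _)

theorem Ifun_eq_energy_add_energy (hf : InH1 f) (hg : InH1 g) (α₀ β₀ : ℝ) :
    Ifun α₀ β₀ f g = energy α₀ f + energy β₀ g := by
  rw [energy, energy, ← integral_add (hf.integrable_energy α₀) (hg.integrable_energy β₀), Ifun]
  congr with x
  ring

theorem mul_sq_integral_le_energy_sq_mul_energy {α₀ β₀ : ℝ} (hf : InH1 f) (hg : InH1 g)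
    (hα : 0 ≤ α₀) (hβ : 0 < β₀) :
    α₀ ^ 2 * √β₀ * (∫ x, f x ^ 2 * g x) ^ 2 ≤ energy α₀ f ^ 2 * energy β₀ g := by
  have hsqrt : 0 < √β₀ := Real.sqrt_pos.2 hβ
  have hsup : ∀ x, g x ^ 2 ≤ energy β₀ g / √β₀ := fun x =>
    (le_div_iff₀' hsqrt).2 (hg.sqrt_mul_sq_le_energy hβ.le x)
  have hholder : (∫ x, f x ^ 2 * g x) ^ 2 ≤ energy β₀ g / √β₀ * (∫ x, f x ^ 2) ^ 2 := by
    simpa only [abs_sq] using sq_integral_mul_le_of_sq_le hf.2.1 (ae_of_all _ hsup)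
  have hmass : (α₀ * ∫ x, f x ^ 2) ^ 2 ≤ energy α₀ f ^ 2 :=
    pow_le_pow_left₀ (mul_nonneg hα (integral_nonneg fun x => sq_nonneg _))
      (hf.mul_integral_sq_le_energy α₀) 2
  calc α₀ ^ 2 * √β₀ * (∫ x, f x ^ 2 * g x) ^ 2
      ≤ α₀ ^ 2 * √β₀ * (energy β₀ g / √β₀ * (∫ x, f x ^ 2) ^ 2) := by gcongr
    _ = (α₀ * ∫ x, f x ^ 2) ^ 2 * energy β₀ g := by field_simp
    _ ≤ energy α₀ f ^ 2 * energy β₀ g :=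
        mul_le_mul_of_nonneg_right hmass (energy_nonneg hβ.le g)

theorem mul_sq_integral_le_Ifun_cube {α₀ β₀ : ℝ} (hf : InH1 f) (hg : InH1 g)
    (hα : 0 ≤ α₀) (hβ : 0 < β₀) :
    α₀ ^ 2 * √β₀ * (∫ x, f x ^ 2 * g x) ^ 2 ≤ Ifun α₀ β₀ f g ^ 3 := by
  have hEf : 0 ≤ energy α₀ f := energy_nonneg hα f
  have hEg : 0 ≤ energy β₀ g := energy_nonneg hβ.le g
  rw [hf.Ifun_eq_energy_add_energy hg]
  calc α₀ ^ 2 * √β₀ * (∫ x, f x ^ 2 * g x) ^ 2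
      ≤ energy α₀ f ^ 2 * energy β₀ g := hf.mul_sq_integral_le_energy_sq_mul_energy hg hα hβ
    _ ≤ (energy α₀ f + energy β₀ g) ^ 2 * (energy α₀ f + energy β₀ g) := by
        gcongr <;> linarith
    _ = (energy α₀ f + energy β₀ g) ^ 3 := by ring

end InH1

theorem Ifun_nonneg {α₀ β₀ : ℝ} (hα : 0 ≤ α₀) (hβ : 0 ≤ β₀) (f g : ℝ → ℝ) :
    0 ≤ Ifun α₀ β₀ f g :=
  integral_nonneg fun x => by positivity

theorem exp_neg_mul_sq_pow (b x : ℝ) (n : ℕ) :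
    Real.exp (-b * x ^ 2) ^ n = Real.exp (-(n * b) * x ^ 2) := by
  rw [← Real.exp_nat_mul]
  ring_nf

theorem inH1_exp_neg_mul_sq {b : ℝ} (hb : 0 < b) : InH1 fun x => Real.exp (-b * x ^ 2) := by
  have hderiv : ∀ x : ℝ, HasDerivAt (fun x => Real.exp (-b * x ^ 2))
      (Real.exp (-b * x ^ 2) * (-b * (2 * x))) x := fun x => by
    simpa using ((hasDerivAt_pow 2 x).const_mul (-b)).exp
  refine ⟨fun x => (hderiv x).differentiableAt, ?_, ?_⟩
  · simpa only [exp_neg_mul_sq_pow] using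
      integrable_exp_neg_mul_sq (b := (2 : ℕ) * b) (by positivity)
  · have hmoment : Integrable fun x : ℝ => x ^ (2 : ℝ) * Real.exp (-((2 : ℕ) * b) * x ^ 2) :=
      integrable_rpow_mul_exp_neg_mul_sq (by positivity) (by norm_num)
    refine (hmoment.const_mul (4 * b ^ 2)).congr (ae_of_all _ fun x => ?_)
    simp only [(hderiv x).deriv, mul_pow, exp_neg_mul_sq_pow, Real.rpow_two]
    ring

theorem IvalSet_nonempty (α₀ β₀ lam : ℝ) : (IvalSet α₀ β₀ lam).Nonempty := by
  let γ : ℝ → ℝ := fun x => Real.exp (-1 * x ^ 2)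
  have hγ : InH1 γ := inH1_exp_neg_mul_sq one_pos
  have hγ_cube : 0 < ∫ x, γ x ^ 3 := by
    simp only [γ, exp_neg_mul_sq_pow, integral_gaussian]
    positivity
  refine ⟨_, γ, fun x => lam / (∫ y, γ y ^ 3) * γ x, hγ, hγ.const_mul _, ?_, rfl⟩
  calc ∫ x, γ x ^ 2 * (lam / (∫ y, γ y ^ 3) * γ x)
      = ∫ x, lam / (∫ y, γ y ^ 3) * γ x ^ 3 := by
        congr with x
        ring
    _ = lam := by rw [integral_const_mul, div_mul_cancel₀ _ hγ_cube.ne']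

theorem rpow_le_Mfun {α₀ β₀ : ℝ} (hα : 0 ≤ α₀) (hβ : 0 < β₀) (lam : ℝ) :
    (α₀ ^ 2 * √β₀ * lam ^ 2) ^ (3 : ℝ)⁻¹ ≤ Mfun α₀ β₀ lam := by
  refine le_csInf (IvalSet_nonempty α₀ β₀ lam) ?_
  rintro m ⟨f, g, hf, hg, rfl, rfl⟩
  rw [Real.rpow_inv_le_iff_of_pos (by positivity) (Ifun_nonneg hα hβ.le f g) three_pos]
  exact_mod_cast hf.mul_sq_integral_le_Ifun_cube hg hα hβ

theorem Mlam_pos_and_finite_general (α₀ β₀ lam : ℝ) (hα : 0 < α₀) (hβ : 0 < β₀) (hlam : lam ≠ 0) :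
    (IvalSet α₀ β₀ lam).Nonempty ∧ 0 < Mfun α₀ β₀ lam := by
  have hbound : 0 < (α₀ ^ 2 * √β₀ * lam ^ 2) ^ (3 : ℝ)⁻¹ := by positivity
  exact ⟨IvalSet_nonempty α₀ β₀ lam, hbound.trans_le (rpow_le_Mfun hα.le hβ lam)⟩

/-- `0 < M_λ < ∞`: the constraint set is nonempty (so the infimum is a
finite real number) and the infimum is strictly positive. -/
theorem Mlam_pos_and_finite (α₀ β₀ lam : ℝ) (hα : 0 < α₀) (hβ : 0 < β₀) (hlam : 0 < lam) :
    (IvalSet α₀ β₀ lam).Nonempty ∧ 0 < Mfun α₀ β₀ lam :=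
  Mlam_pos_and_finite_general α₀ β₀ lam hα hβ hlam.ne'
end
end

section
/- Let α₀ > 0, β₀ > 0 and λ > 0. Then the set S_λ = { (f,g) ∈ H¹(ℝ)×H¹(ℝ) : I(f,g) = M_λ and ∫_ℝ f² g dx = λ } is non-empty; that is, there exists a pair (φ,ψ) ∈ H¹(ℝ)×H¹(ℝ) with ∫_ℝ φ² ψ dx = λ and I(φ,ψ) = M_λ. -/
open MeasureTheory Filter Topology

noncomputable section

/-!
For `a = √α₀` and `b = √β₀` the maps `f ↦ u = f' + a f` and `g ↦ v = g' + b g` turn `I(f, g)` into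
`‖u‖² + ‖v‖²` on `L²(ℝ) × L²(ℝ)`, because the cross terms `2 a f f' = a (f²)'` integrate to zero,
and `∫ f² g` into a form `J(u, v)` homogeneous of degree three. Hence minimizers are rescaled
maximizers of `J` on the unit sphere.

To find a maximizer, translate a maximizing sequence so that `|g(0)|` controls `J`; its weak limit
is then nonzero. The resolvent `(d/dx + a)⁻¹` turns weak into pointwise convergence, so that `J`
splits in the limit into its value at the weak limit and its value at the remainder, while the
squared norms add up to one. As `s ↦ s ^ (3/2)` is strictly superadditive, the remainder carries no
mass and the weak limit is a maximizer.

The Euler–Lagrange equations express `u` and `v` through the adjoint resolvent applied to the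
continuous functions `f g` and `f²`. Thus `u` and `v` have continuous representatives, and `f` and
`g` are differentiable in the classical sense.
-/

/-! ### Maximizers of homogeneous functionals on a Hilbert space -/

section Hilbert

variable {H : Type*} [NormedAddCommGroup H] [InnerProductSpace ℝ H]

/-- Weak convergence of sequences in a Hilbert space, expressed through the inner product. -/
def WeaklyTendsto (W : ℕ → H) (w : H) : Prop :=
  ∀ h : H, Tendsto (fun n => inner ℝ h (W n)) atTop (𝓝 (inner ℝ h w))

lemma exists_subseq_weaklyTendsto [CompleteSpace H] [TopologicalSpace.SeparableSpace H]
    {W : ℕ → H} {R : ℝ} (hW : ∀ n, ‖W n‖ ≤ R) :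
    ∃ (w : H) (φ : ℕ → ℕ), StrictMono φ ∧ WeaklyTendsto (W ∘ φ) w := by
  let D := InnerProductSpace.toDual ℝ H
  have hball : ∀ n, StrongDual.toWeakDual (D (W n)) ∈
      WeakDual.toStrongDual ⁻¹' Metric.closedBall (0 : StrongDual ℝ H) R := fun n => by
    rw [Set.mem_preimage, mem_closedBall_zero_iff]
    exact (D.norm_map (W n)).trans_le (hW n)
  obtain ⟨ℓ, -, φ, hφ, hℓ⟩ := WeakDual.isSeqCompact_closedBall ℝ H 0 R hball
  refine ⟨D.symm (WeakDual.toStrongDual ℓ), φ, hφ, fun h => ?_⟩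
  have heval : Tendsto (fun n => D (W (φ n)) h) atTop (𝓝 (ℓ h)) :=
    ((WeakDual.eval_continuous h).tendsto ℓ).comp hℓ
  have hlim : inner ℝ h (D.symm (WeakDual.toStrongDual ℓ)) = ℓ h := by
    rw [real_inner_comm, InnerProductSpace.toDual_symm_apply]
    rfl
  rw [hlim]
  refine heval.congr fun n => ?_
  rw [real_inner_comm]
  exact InnerProductSpace.toDual_apply_apply ..

lemma WeaklyTendsto.sub_const {W : ℕ → H} {w : H} (hW : WeaklyTendsto W w) :
    WeaklyTendsto (fun n => W n - w) 0 := fun h => by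
  simpa only [inner_sub_right, inner_zero_right, sub_self] using (hW h).sub_const (inner ℝ h w)

lemma WeaklyTendsto.tendsto_norm_sub_sq {W : ℕ → H} {w : H} (hW : WeaklyTendsto W w) {c : ℝ}
    (hc : ∀ n, ‖W n‖ = c) :
    Tendsto (fun n => ‖W n - w‖ ^ 2) atTop (𝓝 (c ^ 2 - ‖w‖ ^ 2)) := by
  have h := ((hW w).const_mul 2).const_sub (c ^ 2 + ‖w‖ ^ 2)
  rw [real_inner_self_eq_norm_sq] at h
  convert h using 2 with n
  · rw [norm_sub_sq_real, hc, real_inner_comm]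
    ring
  · ring

lemma eq_one_of_one_le_pow_add_pow {s r : ℝ} {k : ℕ} (hk : 2 < k) (hs : 0 < s) (hr : 0 ≤ r)
    (hsr : s ^ 2 + r ^ 2 = 1) (h : 1 ≤ s ^ k + r ^ k) : s = 1 := by
  have hs1 : s ≤ 1 := by nlinarith
  have hr1 : r ≤ 1 := by nlinarith
  by_contra hne
  have hsk : s ^ k < s ^ 2 := pow_lt_pow_right_of_lt_one₀ hs (lt_of_le_of_ne hs1 hne) hk
  have hrk : r ^ k ≤ r ^ 2 := pow_le_pow_of_le_one hr hr1 hk.le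
  linarith

lemma le_mul_norm_pow_of_forall_norm_eq_one {J : H → ℝ} {k : ℕ} {K : ℝ} (hk : k ≠ 0)
    (hom : ∀ (t : ℝ) (w : H), 0 ≤ t → J (t • w) = t ^ k * J w)
    (hK : ∀ w, ‖w‖ = 1 → J w ≤ K) (w : H) : J w ≤ K * ‖w‖ ^ k := by
  rcases eq_or_ne w 0 with rfl | hw
  · simpa [hk] using (hom 0 0 le_rfl).le
  · have hunit := hK (‖w‖⁻¹ • w) (by simp [norm_smul, hw])
    calc J w = ‖w‖ ^ k * J (‖w‖⁻¹ • w) := by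
          rw [← hom _ _ (norm_nonneg w), smul_inv_smul₀ (norm_ne_zero_iff.2 hw)]
      _ ≤ K * ‖w‖ ^ k := by
          rw [mul_comm]
          gcongr

/-- In the limit `w` carries the mass `‖w‖²` and the remainder `W n - w` the mass `1 - ‖w‖²`.
As `s ↦ s ^ (k / 2)` is strictly superadditive for `k > 2`, splitting the mass would lose value. -/
lemma WeaklyTendsto.norm_eq_one_and_le {J : H → ℝ} {k : ℕ} (hk : 2 < k) {K : ℝ} (hK0 : 0 < K)
    (hK : ∀ z, J z ≤ K * ‖z‖ ^ k) {W : ℕ → H} {w : H} (hW : WeaklyTendsto W w) (hw : w ≠ 0)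
    (hW1 : ∀ n, ‖W n‖ = 1) (hJW : Tendsto (fun n => J (W n)) atTop (𝓝 K))
    (hsplit : Tendsto (fun n => J (W n) - J (W n - w)) atTop (𝓝 (J w))) :
    ‖w‖ = 1 ∧ K ≤ J w := by
  have hsq := hW.tendsto_norm_sub_sq hW1
  have hmass : 0 ≤ 1 ^ 2 - ‖w‖ ^ 2 := ge_of_tendsto' hsq fun n => sq_nonneg _
  set r := √(1 ^ 2 - ‖w‖ ^ 2) with hr
  have hsr : ‖w‖ ^ 2 + r ^ 2 = 1 := by
    rw [hr, Real.sq_sqrt hmass]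
    ring
  have hnorm : Tendsto (fun n => ‖W n - w‖) atTop (𝓝 r) := by
    simpa only [Real.sqrt_sq (norm_nonneg _)] using hsq.sqrt
  have hrem : Tendsto (fun n => J (W n - w)) atTop (𝓝 (K - J w)) := by
    simpa only [sub_sub_cancel] using hJW.sub hsplit
  have hlim : K - J w ≤ K * r ^ k :=
    le_of_tendsto_of_tendsto' hrem ((hnorm.pow k).const_mul K) fun n => hK _
  have hone : 1 ≤ ‖w‖ ^ k + r ^ k := by
    refine le_of_mul_le_mul_left ?_ hK0
    linarith [hK w]
  have hw1 := eq_one_of_one_le_pow_add_pow hk (norm_pos_iff.2 hw) (Real.sqrt_nonneg _) hsr hone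
  have hr0 : r = 0 := by
    rw [hw1] at hsr
    exact pow_eq_zero_iff two_ne_zero |>.1 (by linarith)
  refine ⟨hw1, ?_⟩
  rw [hr0, zero_pow (by lia), mul_zero] at hlim
  linarith

lemma exists_maximizer_of_weak_splitting [CompleteSpace H] [TopologicalSpace.SeparableSpace H]
    {J : H → ℝ} {k : ℕ} (hk : 2 < k)
    (hom : ∀ (t : ℝ) (w : H), 0 ≤ t → J (t • w) = t ^ k * J w)
    (hsplit : ∀ (W : ℕ → H) (w : H), (∀ n, ‖W n‖ = 1) → WeaklyTendsto W w →
      Tendsto (fun n => J (W n) - J (W n - w)) atTop (𝓝 (J w)))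
    {e : H} (hvanish : ∀ w, ‖w‖ = 1 → ∃ z, ‖z‖ = 1 ∧ J z = J w ∧ J w ≤ |inner ℝ e z|)
    (hpos : ∃ w, 0 < J w) :
    ∃ w, ‖w‖ = 1 ∧ 0 < J w ∧ ∀ z, J z ≤ J w * ‖z‖ ^ k := by
  set S : Set ℝ := J '' {w | ‖w‖ = 1}
  have hbdd : BddAbove S := by
    refine ⟨‖e‖, ?_⟩
    rintro _ ⟨w, hw, rfl⟩
    obtain ⟨z, hz, -, hwz⟩ := hvanish w hw
    calc J w ≤ |inner ℝ e z| := hwz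
      _ ≤ ‖e‖ * ‖z‖ := abs_real_inner_le_norm e z
      _ = ‖e‖ := by rw [hz, mul_one]
  have hle : ∀ z, J z ≤ sSup S * ‖z‖ ^ k :=
    le_mul_norm_pow_of_forall_norm_eq_one (by lia) hom
      fun w hw => le_csSup hbdd (Set.mem_image_of_mem J hw)
  obtain ⟨p, hp⟩ := hpos
  have hp0 : p ≠ 0 := by
    rintro rfl
    have h0 := hle 0
    rw [norm_zero, zero_pow (by lia), mul_zero] at h0
    exact hp.not_ge h0
  have hK : 0 < sSup S :=
    pos_of_mul_pos_left (hp.trans_le (hle p)) (pow_nonneg (norm_nonneg p) k)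
  have hS : S.Nonempty := Set.Nonempty.image J ⟨‖p‖⁻¹ • p, by simp [norm_smul, hp0]⟩
  obtain ⟨v, -, hv, hvS⟩ := exists_seq_tendsto_sSup hS hbdd
  choose V hV hJV using hvS
  choose Z hZ hJZ hle_inner using fun n => hvanish (V n) (hV n)
  obtain ⟨w, φ, hφ, hweak⟩ := exists_subseq_weaklyTendsto fun n => (hZ n).le
  have hJ : Tendsto (fun n => J (Z (φ n))) atTop (𝓝 (sSup S)) := by
    simpa only [hJZ, hJV, Function.comp_def] using hv.comp hφ.tendsto_atTop
  have hw : w ≠ 0 := by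
    rintro rfl
    have hK0 := le_of_tendsto_of_tendsto' hJ (hweak e).abs fun n => by
      simpa only [Function.comp, hJZ] using hle_inner (φ n)
    rw [inner_zero_right, abs_zero] at hK0
    exact hK.not_ge hK0
  obtain ⟨hw1, hKw⟩ := hweak.norm_eq_one_and_le hk hK hle hw (fun n => hZ _) hJ
    (hsplit _ _ (fun n => hZ _) hweak)
  refine ⟨w, hw1, hK.trans_le hKw, fun z => (hle z).trans ?_⟩
  gcongr

/-- First variation of the inequality `J z ≤ J w ‖z‖ ^ k` at its equality case `z = w`. -/
lemma deriv_eq_of_forall_le_mul_norm_pow {J : H → ℝ} {k : ℕ} {w h : H} (hw : ‖w‖ = 1)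
    (hmax : ∀ z, J z ≤ J w * ‖z‖ ^ k) {d : ℝ}
    (hd : HasDerivAt (fun t : ℝ => J (w + t • h)) d 0) : d = k * J w * inner ℝ w h := by
  have hline : HasDerivAt (fun t : ℝ => w + t • h) h 0 := by
    simpa using ((hasDerivAt_id (0 : ℝ)).smul_const h).const_add w
  have hnorm : HasDerivAt (fun t : ℝ => ‖w + t • h‖) (inner ℝ w h) 0 := by
    have hsqrt := hline.norm_sq.sqrt (by simp [hw])
    simpa [hw] using hsqrt
  have hdiff := ((hnorm.pow k).const_mul (J w)).sub hd
  have hmin : IsLocalMin (fun t : ℝ => J w * ‖w + t • h‖ ^ k - J (w + t • h)) 0 :=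
    Eventually.of_forall fun t => by simpa [hw] using hmax (w + t • h)
  have h0 := hmin.hasDerivAt_eq_zero hdiff
  simp only [zero_smul, add_zero, hw, one_pow, mul_one] at h0
  linarith

end Hilbert

/-! ### Integral inequalities -/

section Integral

variable {α : Type*} [MeasurableSpace α] {μ : Measure α}

lemma inner_L2_eq_integral (u v : Lp ℝ 2 μ) : inner ℝ u v = ∫ x, u x * v x ∂μ := by
  simp only [L2.inner_def, RCLike.inner_apply, conj_trivial, mul_comm]

lemma norm_L2_sq_eq_integral (u : Lp ℝ 2 μ) : ‖u‖ ^ 2 = ∫ x, u x ^ 2 ∂μ := by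
  rw [← real_inner_self_eq_norm_sq, inner_L2_eq_integral]
  simp only [sq]

lemma norm_toLp_two_sq {f : α → ℝ} (hf : MemLp f 2 μ) : ‖hf.toLp f‖ ^ 2 = ∫ x, f x ^ 2 ∂μ := by
  rw [norm_L2_sq_eq_integral]
  refine integral_congr_ae ?_
  filter_upwards [hf.coeFn_toLp] with x hx
  rw [hx]

lemma sq_integral_mul_le {f g : α → ℝ} (hf : MemLp f 2 μ) (hg : MemLp g 2 μ) :
    (∫ x, f x * g x ∂μ) ^ 2 ≤ (∫ x, f x ^ 2 ∂μ) * ∫ x, g x ^ 2 ∂μ := by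
  have hinner : inner ℝ (hf.toLp f) (hg.toLp g) = ∫ x, f x * g x ∂μ := by
    rw [inner_L2_eq_integral]
    refine integral_congr_ae ?_
    filter_upwards [hf.coeFn_toLp, hg.coeFn_toLp] with x hfx hgx
    rw [hfx, hgx]
  rw [← hinner, ← norm_toLp_two_sq hf, ← norm_toLp_two_sq hg, ← mul_pow]
  exact sq_le_sq' (neg_le_of_abs_le (abs_real_inner_le_norm _ _)) (real_inner_le_norm _ _)

lemma sq_integral_mul_le_of_weight {w u : α → ℝ} (hw : Integrable w μ) (hw0 : 0 ≤ w)
    (hu : AEStronglyMeasurable u μ) (huw : Integrable (fun x => u x ^ 2 * w x) μ) :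
    (∫ x, u x * w x ∂μ) ^ 2 ≤ (∫ x, w x ∂μ) * ∫ x, u x ^ 2 * w x ∂μ := by
  have hsqrt (x : α) : √(w x) ^ 2 = w x := Real.sq_sqrt (hw0 x)
  have hmeas : AEStronglyMeasurable (fun x => √(w x)) μ :=
    Real.continuous_sqrt.comp_aestronglyMeasurable hw.1
  have hsw : MemLp (fun x => √(w x)) 2 μ :=
    (memLp_two_iff_integrable_sq hmeas).2 (by simpa only [hsqrt] using hw)
  have husw : MemLp (fun x => u x * √(w x)) 2 μ :=
    (memLp_two_iff_integrable_sq (hu.mul hmeas)).2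
      (by simpa only [Pi.mul_apply, mul_pow, hsqrt] using huw)
  have hcs := sq_integral_mul_le hsw husw
  simpa only [mul_pow, hsqrt, mul_left_comm _ (u _), ← sq] using hcs

lemma exists_abs_integral_mul_le [Nonempty α] {h : α → ℝ} (hh : Integrable h μ) (hh0 : 0 ≤ h)
    (g : α → ℝ) : ∃ x, |∫ y, h y * g y ∂μ| ≤ 2 * |g x| * ∫ y, h y ∂μ := by
  set A := ∫ y, h y * g y ∂μ with hA
  set K := ∫ y, h y ∂μ with hK
  by_contra! hlt
  have hK0 : 0 ≤ K := integral_nonneg hh0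
  have hA0 : 0 < |A| := lt_of_le_of_lt (by positivity) (hlt (Classical.arbitrary α))
  rcases hK0.eq_or_lt with hK0 | hKpos
  · have hzero : h =ᵐ[μ] 0 := (integral_eq_zero_iff_of_nonneg hh0 hh).1 hK0.symm
    have hA_eq : A = 0 := integral_eq_zero_of_ae (μ := μ) (hzero.mono fun x hx => by simp [hx])
    simp [hA_eq] at hA0
  · have hg (x : α) : |g x| ≤ |A| / (2 * K) := by
      rw [le_div_iff₀ (by positivity)]
      linarith [hlt x]
    have hle : |A| ≤ K * (|A| / (2 * K)) := by
      rw [hK, ← integral_mul_const, hA, ← Real.norm_eq_abs]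
      refine norm_integral_le_of_norm_le (hh.mul_const _) (ae_of_all _ fun x => ?_)
      rw [norm_mul, Real.norm_of_nonneg (hh0 x)]
      exact mul_le_mul_of_nonneg_left (hg x) (hh0 x)
    have hhalf : K * (|A| / (2 * K)) = |A| / 2 := by field_simp
    linarith

/-- Since `(∫ q_n h r_n)² ≤ ∫ q_n² ∫ h² r_n²`, dominated convergence applies to the last factor. -/
lemma tendsto_integral_mul_mul_zero {q r : ℕ → α → ℝ} {h : α → ℝ} {R C : ℝ}
    (hq : ∀ n, MemLp (q n) 2 μ) (hqR : ∀ n, ∫ x, q n x ^ 2 ∂μ ≤ R) (hh : MemLp h 2 μ)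
    (hr : ∀ n, AEStronglyMeasurable (r n) μ) (hrC : ∀ n x, |r n x| ≤ C)
    (hr0 : ∀ x, Tendsto (fun n => r n x) atTop (𝓝 0)) :
    Tendsto (fun n => ∫ x, q n x * (h x * r n x) ∂μ) atTop (𝓝 0) := by
  have hsq (n : ℕ) (x : α) : r n x ^ 2 ≤ C ^ 2 :=
    sq_le_sq' (neg_le_of_abs_le (hrC n x)) (le_of_abs_le (hrC n x))
  have hhr (n : ℕ) : MemLp (fun x => h x * r n x) 2 μ :=
    (memLp_top_of_bound (hr n) C (ae_of_all _ (hrC n))).mul hh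
  have hdct : Tendsto (fun n => ∫ x, (h x * r n x) ^ 2 ∂μ) atTop (𝓝 (∫ _, (0 : ℝ) ∂μ)) := by
    refine tendsto_integral_of_dominated_convergence (fun x => h x ^ 2 * C ^ 2)
      (fun n => (hhr n).1.pow 2) (hh.integrable_sq.mul_const _)
      (fun n => ae_of_all _ fun x => ?_) (ae_of_all _ fun x => ?_)
    · rw [Real.norm_of_nonneg (sq_nonneg _), mul_pow]
      exact mul_le_mul_of_nonneg_left (hsq n x) (sq_nonneg _)
    · simpa using ((hr0 x).const_mul (h x)).pow 2
  have hsqrt : Tendsto (fun n => √(R * ∫ x, (h x * r n x) ^ 2 ∂μ)) atTop (𝓝 0) := by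
    simpa using (hdct.const_mul R).sqrt
  refine squeeze_zero_norm (fun n => Real.abs_le_sqrt ?_) hsqrt
  calc (∫ x, q n x * (h x * r n x) ∂μ) ^ 2
      ≤ (∫ x, q n x ^ 2 ∂μ) * ∫ x, (h x * r n x) ^ 2 ∂μ := sq_integral_mul_le (hq n) (hhr n)
    _ ≤ R * ∫ x, (h x * r n x) ^ 2 ∂μ :=
        mul_le_mul_of_nonneg_right (hqR n) (integral_nonneg fun x => sq_nonneg _)

end Integral

/-! ### The cubic form `∫ f² g` on `L² ∩ L^∞` -/

section CubicIntegral

variable {α : Type*} [MeasurableSpace α] {μ : Measure α}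

/-- Membership in `L² ∩ L^∞`, an algebra on which `∫ f² g` is finite. -/
structure MemLpTwoTop (f : α → ℝ) (μ : Measure α) : Prop where
  two : MemLp f 2 μ
  top : MemLp f ⊤ μ

variable {f g r s : α → ℝ}

lemma MemLpTwoTop.mul (hf : MemLpTwoTop f μ) (hg : MemLpTwoTop g μ) :
    MemLpTwoTop (fun x => f x * g x) μ :=
  ⟨hg.two.mul hf.top, hg.top.mul hf.top⟩

lemma MemLpTwoTop.integrable_mul_mul (hf : MemLpTwoTop f μ) (hg : MemLpTwoTop g μ)
    (hr : MemLpTwoTop r μ) : Integrable (fun x => f x * (g x * r x)) μ :=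
  hf.two.integrable_mul (hg.mul hr).two

lemma integral_add_sq_mul_add (hf : MemLpTwoTop f μ) (hg : MemLpTwoTop g μ)
    (hr : MemLpTwoTop r μ) (hs : MemLpTwoTop s μ) :
    ∫ x, (f x + r x) ^ 2 * (g x + s x) ∂μ = ∫ x, f x ^ 2 * g x ∂μ
      + (2 * ∫ x, f x * (g x * r x) ∂μ + ∫ x, f x * (f x * s x) ∂μ)
      + (2 * ∫ x, r x * (f x * s x) ∂μ + ∫ x, r x * (g x * r x) ∂μ)
      + ∫ x, r x ^ 2 * s x ∂μ := by
  have hffg := hf.integrable_mul_mul hf hg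
  have hfgr := (hf.integrable_mul_mul hg hr).const_mul 2
  have hffs := hf.integrable_mul_mul hf hs
  have hrfs := (hr.integrable_mul_mul hf hs).const_mul 2
  have hrgr := hr.integrable_mul_mul hg hr
  have hrrs := hr.integrable_mul_mul hr hs
  simp only [sq (f _), sq (r _), mul_assoc (f _) (f _), mul_assoc (r _) (r _), ← integral_const_mul]
  rw [← integral_add' hfgr hffs, ← integral_add' hrfs hrgr, ← integral_add' hffg (hfgr.add hffs),
    ← integral_add' (hffg.add (hfgr.add hffs)) (hrfs.add hrgr),
    ← integral_add' ((hffg.add (hfgr.add hffs)).add (hrfs.add hrgr)) hrrs]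
  congr 1 with x
  simp only [Pi.add_apply]
  ring

/-- Brezis–Lieb splitting: every mixed term has a fixed `L²` factor, against which the pointwise
convergence can be used. -/
lemma tendsto_integral_add_sq_mul_add_sub {r s : ℕ → α → ℝ} {C D R : ℝ}
    (hf : MemLpTwoTop f μ) (hg : MemLpTwoTop g μ)
    (hr : ∀ n, MemLpTwoTop (r n) μ) (hs : ∀ n, MemLpTwoTop (s n) μ)
    (hrC : ∀ n x, |r n x| ≤ C) (hsD : ∀ n x, |s n x| ≤ D) (hrR : ∀ n, ∫ x, r n x ^ 2 ∂μ ≤ R)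
    (hr0 : ∀ x, Tendsto (fun n => r n x) atTop (𝓝 0))
    (hs0 : ∀ x, Tendsto (fun n => s n x) atTop (𝓝 0)) :
    Tendsto (fun n => ∫ x, (f x + r n x) ^ 2 * (g x + s n x) ∂μ - ∫ x, r n x ^ 2 * s n x ∂μ)
      atTop (𝓝 (∫ x, f x ^ 2 * g x ∂μ)) := by
  have hfgr := tendsto_integral_mul_mul_zero (q := fun _ => f) (fun _ => hf.two) (fun _ => le_rfl)
    hg.two (fun n => (hr n).two.1) hrC hr0
  have hffs := tendsto_integral_mul_mul_zero (q := fun _ => f) (fun _ => hf.two) (fun _ => le_rfl)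
    hf.two (fun n => (hs n).two.1) hsD hs0
  have hrfs := tendsto_integral_mul_mul_zero (fun n => (hr n).two) hrR
    hf.two (fun n => (hs n).two.1) hsD hs0
  have hrgr := tendsto_integral_mul_mul_zero (fun n => (hr n).two) hrR
    hg.two (fun n => (hr n).two.1) hrC hr0
  have hlim := ((((hfgr.const_mul 2).add hffs).add ((hrfs.const_mul 2).add hrgr)).const_add
    (∫ x, f x ^ 2 * g x ∂μ))
  simp only [mul_zero, add_zero] at hlim
  refine hlim.congr fun n => ?_
  rw [integral_add_sq_mul_add hf hg (hr n) (hs n)]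
  ring

lemma hasDerivAt_integral_add_sq_mul_add (hf : MemLpTwoTop f μ) (hg : MemLpTwoTop g μ)
    (hr : MemLpTwoTop r μ) (hs : MemLpTwoTop s μ) :
    HasDerivAt (fun t : ℝ => ∫ x, (f x + t * r x) ^ 2 * (g x + t * s x) ∂μ)
      (2 * ∫ x, f x * (g x * r x) ∂μ + ∫ x, f x * (f x * s x) ∂μ) 0 := by
  set A := ∫ x, f x ^ 2 * g x ∂μ with hA
  set B := 2 * ∫ x, f x * (g x * r x) ∂μ + ∫ x, f x * (f x * s x) ∂μ with hB
  set C := 2 * ∫ x, r x * (f x * s x) ∂μ + ∫ x, r x * (g x * r x) ∂μ with hC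
  set D := ∫ x, r x ^ 2 * s x ∂μ with hD
  have hscale {p : α → ℝ} (hp : MemLpTwoTop p μ) (t : ℝ) : MemLpTwoTop (fun x => t * p x) μ :=
    ⟨hp.two.const_mul t, hp.top.const_mul t⟩
  have hcubic (t : ℝ) : ∫ x, (f x + t * r x) ^ 2 * (g x + t * s x) ∂μ
      = A + t * B + t ^ 2 * C + t ^ 3 * D := by
    rw [integral_add_sq_mul_add hf hg (hscale hr t) (hscale hs t), hA, hB, hC, hD]
    simp only [mul_pow, mul_assoc t, mul_assoc (t ^ 2), mul_left_comm _ t, integral_const_mul]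
    ring
  simp only [hcubic]
  have ht := hasDerivAt_id' (0 : ℝ)
  refine ((((ht.mul_const B).const_add A).add ((ht.pow 2).mul_const C)).add
    ((ht.pow 3).mul_const D)).congr_deriv ?_
  simp

end CubicIntegral

/-! ### Convolution with an integrable kernel -/

section Young

variable {G : Type*} [MeasurableSpace G] [AddCommGroup G] [MeasurableAdd₂ G] [MeasurableNeg G]
  {μ : Measure G} [SFinite μ] [μ.IsAddLeftInvariant] [μ.IsNegInvariant] {κ u : G → ℝ}

lemma ae_sq_convolution_le (hκ : Integrable κ μ) (hκ0 : 0 ≤ κ) (hu : MemLp u 2 μ) :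
    ∀ᵐ x ∂μ, convolution u κ (ContinuousLinearMap.mul ℝ ℝ) μ x ^ 2 ≤ (∫ t, κ t ∂μ) *
      convolution (fun t => u t ^ 2) κ (ContinuousLinearMap.mul ℝ ℝ) μ x := by
  filter_upwards [hu.integrable_sq.ae_convolution_exists (ContinuousLinearMap.mul ℝ ℝ) hκ] with x hx
  have hcs := sq_integral_mul_le_of_weight (hκ.comp_sub_left x) (fun t => hκ0 (x - t)) hu.1 hx
  rwa [integral_sub_left_eq_self] at hcs

lemma memLp_two_convolution (hκ : Integrable κ μ) (hκ0 : 0 ≤ κ) (hu : MemLp u 2 μ) :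
    MemLp (convolution u κ (ContinuousLinearMap.mul ℝ ℝ) μ) 2 μ := by
  have hmeas := (hu.1.convolution_integrand (ContinuousLinearMap.mul ℝ ℝ) hκ.1).integral_prod_right'
  refine (memLp_two_iff_integrable_sq hmeas).2 ?_
  refine ((hu.integrable_sq.integrable_convolution (ContinuousLinearMap.mul ℝ ℝ) hκ).const_mul
    (∫ t, κ t ∂μ)).mono' (hmeas.pow 2) ?_
  filter_upwards [ae_sq_convolution_le hκ hκ0 hu] with x hx
  rwa [Real.norm_of_nonneg (sq_nonneg _)]

lemma integral_sq_convolution_le (hκ : Integrable κ μ) (hκ0 : 0 ≤ κ) (hu : MemLp u 2 μ) :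
    ∫ x, convolution u κ (ContinuousLinearMap.mul ℝ ℝ) μ x ^ 2 ∂μ
      ≤ (∫ t, κ t ∂μ) ^ 2 * ∫ x, u x ^ 2 ∂μ := by
  let L := ContinuousLinearMap.mul ℝ ℝ
  calc ∫ x, convolution u κ L μ x ^ 2 ∂μ
      ≤ ∫ x, (∫ t, κ t ∂μ) * convolution (fun t => u t ^ 2) κ L μ x ∂μ :=
        integral_mono_ae (memLp_two_convolution hκ hκ0 hu).integrable_sq
          ((hu.integrable_sq.integrable_convolution L hκ).const_mul _)
          (ae_sq_convolution_le hκ hκ0 hu)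
    _ = (∫ t, κ t ∂μ) ^ 2 * ∫ x, u x ^ 2 ∂μ := by
        rw [integral_const_mul, integral_convolution L hu.integrable_sq hκ,
          ContinuousLinearMap.mul_apply']
        ring

end Young

/-! ### The resolvent of `d/dx` -/

section Resolvent

variable {a : ℝ}

/-- The kernel of `(d/dx + a)⁻¹`. -/
def expKernel (a : ℝ) : ℝ → ℝ := (Set.Ici 0).indicator fun s => Real.exp (-(a * s))

/-- The operator `(d/dx + a)⁻¹` on `L²(ℝ)`, as a convolution so that its values are functions
defined everywhere. -/
def expConv (a : ℝ) (u : ℝ → ℝ) : ℝ → ℝ :=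
  convolution u (expKernel a) (ContinuousLinearMap.mul ℝ ℝ) volume

lemma expKernel_nonneg (a : ℝ) : 0 ≤ expKernel a :=
  fun _ => Set.indicator_nonneg (fun _ _ => (Real.exp_pos _).le) _

lemma expKernel_sq (a s : ℝ) : expKernel a s ^ 2 = expKernel (2 * a) s := by
  simp only [expKernel, Set.indicator_apply]
  split_ifs
  · rw [← Real.exp_nat_mul]
    congr 1
    push_cast
    ring
  · exact zero_pow two_ne_zero

lemma integrable_expKernel (ha : 0 < a) : Integrable (expKernel a) := by
  rw [expKernel, integrable_indicator_iff measurableSet_Ici, integrableOn_Ici_iff_integrableOn_Ioi]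
  simpa only [neg_mul] using exp_neg_integrableOn_Ioi 0 ha

lemma integral_expKernel (ha : 0 < a) : ∫ s, expKernel a s = a⁻¹ := by
  rw [expKernel, integral_indicator measurableSet_Ici, integral_Ici_eq_integral_Ioi]
  simpa [neg_div_neg_eq] using integral_exp_mul_Ioi (neg_neg_of_pos ha) 0

lemma memLp_expKernel_comp_sub_left (ha : 0 < a) (x : ℝ) :
    MemLp (fun t => expKernel a (x - t)) 2 := by
  refine (memLp_two_iff_integrable_sq ((integrable_expKernel ha).comp_sub_left x).1).2 ?_
  simp only [expKernel_sq]
  exact (integrable_expKernel (by positivity)).comp_sub_left x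

lemma expConv_apply (a : ℝ) (u : ℝ → ℝ) (x : ℝ) :
    expConv a u x = ∫ t, u t * expKernel a (x - t) := rfl

lemma expConv_congr_ae {u v : ℝ → ℝ} (h : u =ᵐ[volume] v) : expConv a u = expConv a v :=
  convolution_congr _ h EventuallyEq.rfl

lemma expConv_nonneg {u : ℝ → ℝ} (hu : 0 ≤ u) : 0 ≤ expConv a u :=
  fun x => integral_nonneg fun t => mul_nonneg (hu t) (expKernel_nonneg a (x - t))

lemma expConv_comp_add_right (a : ℝ) (u : ℝ → ℝ) (c x : ℝ) :
    expConv a (fun t => u (t + c)) x = expConv a u (x + c) := by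
  rw [expConv_apply, expConv_apply,
    ← integral_add_right_eq_self (fun t => u t * expKernel a (x + c - t)) c]
  simp only [add_sub_add_right_eq_sub]

lemma memLp_two_expConv (ha : 0 < a) {u : ℝ → ℝ} (hu : MemLp u 2) : MemLp (expConv a u) 2 :=
  memLp_two_convolution (integrable_expKernel ha) (expKernel_nonneg a) hu

lemma integral_expConv_sq_le (ha : 0 < a) {u : ℝ → ℝ} (hu : MemLp u 2) :
    ∫ x, expConv a u x ^ 2 ≤ (a⁻¹) ^ 2 * ∫ x, u x ^ 2 := by
  rw [← integral_expKernel ha]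
  exact integral_sq_convolution_le (integrable_expKernel ha) (expKernel_nonneg a) hu

lemma expConv_sq_le (ha : 0 < a) {u : ℝ → ℝ} (hu : MemLp u 2) (x : ℝ) :
    expConv a u x ^ 2 ≤ (2 * a)⁻¹ * ∫ t, u t ^ 2 := by
  have hcs := sq_integral_mul_le hu (memLp_expKernel_comp_sub_left ha x)
  simp only [expKernel_sq] at hcs
  rwa [integral_sub_left_eq_self, integral_expKernel (by positivity), mul_comm] at hcs

lemma exists_inner_eq_expConv (ha : 0 < a) (x : ℝ) :
    ∃ e : Lp ℝ 2 (volume : Measure ℝ), ∀ u : Lp ℝ 2 (volume : Measure ℝ),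
      inner ℝ e u = expConv a u x := by
  have he := memLp_expKernel_comp_sub_left ha x
  refine ⟨he.toLp _, fun u => ?_⟩
  rw [inner_L2_eq_integral, expConv_apply]
  refine integral_congr_ae ?_
  filter_upwards [he.coeFn_toLp] with t ht
  rw [ht, mul_comm]

lemma exists_expConv_zero_pos (ha : 0 < a) :
    ∃ u : ℝ → ℝ, MemLp u 2 ∧ 0 ≤ u ∧ 0 < expConv a u 0 := by
  refine ⟨fun t => expKernel a (0 - t), memLp_expKernel_comp_sub_left ha 0,
    fun t => expKernel_nonneg a (0 - t), ?_⟩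
  simp only [expConv_apply, ← sq, expKernel_sq]
  rw [integral_sub_left_eq_self, integral_expKernel (by positivity)]
  positivity

lemma expConv_eq_integral_Iic (a : ℝ) (u : ℝ → ℝ) (x : ℝ) :
    expConv a u x = Real.exp (-(a * x)) * ∫ t in Set.Iic x, Real.exp (a * t) * u t := by
  rw [expConv_apply, ← integral_const_mul, ← integral_indicator measurableSet_Iic]
  congr 1 with t
  simp only [expKernel, Set.indicator_apply, Set.mem_Ici, Set.mem_Iic, sub_nonneg, mul_ite,
    mul_zero]
  congr 1
  rw [← mul_assoc, ← Real.exp_add, mul_comm]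
  ring_nf

lemma integrableOn_exp_mul (ha : 0 < a) {u : ℝ → ℝ} (hu : MemLp u 2) (x : ℝ) :
    IntegrableOn (fun t => Real.exp (a * t) * u t) (Set.Iic x) := by
  have h := ((memLp_expKernel_comp_sub_left ha x).integrable_mul hu).const_mul (Real.exp (a * x))
  refine (h.integrableOn (s := Set.Iic x)).congr_fun (fun t ht => ?_) measurableSet_Iic
  have hκ : expKernel a (x - t) = Real.exp (-(a * (x - t))) :=
    Set.indicator_of_mem (Set.mem_Ici.2 (sub_nonneg.2 ht)) _
  simp only [Pi.mul_apply, hκ]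
  rw [← mul_assoc, ← Real.exp_add]
  ring_nf

lemma expConv_eq_intervalIntegral (ha : 0 < a) {u : ℝ → ℝ} (hu : MemLp u 2) (x : ℝ) :
    expConv a u x = Real.exp (-(a * x)) * ((∫ t in Set.Iic 0, Real.exp (a * t) * u t)
      + ∫ t in (0 : ℝ)..x, Real.exp (a * t) * u t) := by
  rw [expConv_eq_integral_Iic, ← intervalIntegral.integral_Iic_sub_Iic
    (integrableOn_exp_mul ha hu 0) (integrableOn_exp_mul ha hu x), add_sub_cancel]

lemma continuous_expConv (ha : 0 < a) {u : ℝ → ℝ} (hu : MemLp u 2) :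
    Continuous (expConv a u) := by
  have hprim : Continuous fun x => ∫ t in (0 : ℝ)..x, Real.exp (a * t) * u t :=
    intervalIntegral.continuous_primitive (fun p q => intervalIntegrable_iff.2 <|
      (integrableOn_exp_mul ha hu (max p q)).mono_set fun _ ht => ht.2) 0
  rw [funext (expConv_eq_intervalIntegral ha hu)]
  fun_prop

lemma hasDerivAt_expConv (ha : 0 < a) {p : ℝ → ℝ} (hp : MemLp p 2) (hc : Continuous p) (x : ℝ) :
    HasDerivAt (expConv a p) (p x - a * expConv a p x) x := by
  have hcont : Continuous fun t => Real.exp (a * t) * p t := by fun_prop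
  have hprim : HasDerivAt (fun x => ∫ t in (0 : ℝ)..x, Real.exp (a * t) * p t)
      (Real.exp (a * x) * p x) x := hcont.integral_hasStrictDerivAt 0 x |>.hasDerivAt
  have hexp : HasDerivAt (fun x => Real.exp (-(a * x))) (Real.exp (-(a * x)) * -(a * 1)) x :=
    ((hasDerivAt_id x).const_mul a).neg.exp
  have hcancel : Real.exp (-(a * x)) * Real.exp (a * x) = 1 := by
    rw [← Real.exp_add, neg_add_cancel, Real.exp_zero]
  rw [funext (expConv_eq_intervalIntegral ha hp)]
  refine (hexp.mul (hprim.const_add _)).congr_deriv ?_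
  linear_combination p x * hcancel

lemma memLpTwoTop_expConv (ha : 0 < a) {u : ℝ → ℝ} (hu : MemLp u 2) :
    MemLpTwoTop (expConv a u) volume :=
  ⟨memLp_two_expConv ha hu, memLp_top_of_bound (memLp_two_expConv ha hu).1 _
    (ae_of_all _ fun x => Real.abs_le_sqrt (expConv_sq_le ha hu x))⟩

/-- The adjoint `(a - d/dx)⁻¹` of `expConv a`, obtained by reflection. -/
def expConvAdj (a : ℝ) (p : ℝ → ℝ) (x : ℝ) : ℝ := expConv a (fun t => p (-t)) (-x)

lemma memLp_two_comp_neg {p : ℝ → ℝ} (hp : MemLp p 2) : MemLp (fun x => p (-x)) 2 :=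
  hp.comp_measurePreserving (Measure.measurePreserving_neg (volume : Measure ℝ))

lemma memLp_two_expConvAdj (ha : 0 < a) {p : ℝ → ℝ} (hp : MemLp p 2) :
    MemLp (expConvAdj a p) 2 :=
  memLp_two_comp_neg (memLp_two_expConv ha (memLp_two_comp_neg hp))

lemma continuous_expConvAdj (ha : 0 < a) {p : ℝ → ℝ} (hp : MemLp p 2) :
    Continuous (expConvAdj a p) :=
  (continuous_expConv ha (memLp_two_comp_neg hp)).comp continuous_neg

lemma hasDerivAt_expConvAdj (ha : 0 < a) {p : ℝ → ℝ} (hp : MemLp p 2) (hc : Continuous p)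
    (x : ℝ) : HasDerivAt (expConvAdj a p) (a * expConvAdj a p x - p x) x := by
  refine ((hasDerivAt_expConv ha (memLp_two_comp_neg hp) (by fun_prop) (-x)).scomp x
    (hasDerivAt_neg x)).congr_deriv ?_
  simp only [neg_neg, smul_eq_mul, expConvAdj]
  ring

lemma integral_mul_expConv_eq (ha : 0 < a) {p h : ℝ → ℝ} (hp : MemLp p 2) (hpc : Continuous p)
    (hh : MemLp h 2) (hhc : Continuous h) :
    ∫ x, p x * expConv a h x = ∫ x, expConvAdj a p x * h x := by
  have hP := memLp_two_expConvAdj ha hp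
  have hTh := memLp_two_expConv ha hh
  have hderiv (x : ℝ) : HasDerivAt (fun x => expConvAdj a p x * expConv a h x)
      (expConvAdj a p x * h x - p x * expConv a h x) x :=
    ((hasDerivAt_expConvAdj ha hp hpc x).mul (hasDerivAt_expConv ha hh hhc x)).congr_deriv
      (by ring)
  have hPh : Integrable (fun x => expConvAdj a p x * h x) := hP.integrable_mul hh
  have hpTh : Integrable (fun x => p x * expConv a h x) := hp.integrable_mul hTh
  have hzero := integral_eq_zero_of_hasDerivAt_of_integrable hderiv (hPh.sub hpTh)
    (hP.integrable_mul hTh)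
  rw [integral_sub hPh hpTh] at hzero
  linarith

lemma ae_eq_expConvAdj_of_integral_mul_eq (ha : 0 < a) {u p : ℝ → ℝ} (hu : MemLp u 2)
    (hp : MemLp p 2) (hpc : Continuous p)
    (hweak : ∀ h, MemLp h 2 → ∫ x, u x * h x = ∫ x, p x * expConv a h x) :
    u =ᵐ[volume] expConvAdj a p := by
  refine ae_eq_of_integral_contDiff_smul_eq (hu.locallyIntegrable one_le_two)
    ((memLp_two_expConvAdj ha hp).locallyIntegrable one_le_two) fun h hh hsupp => ?_
  have hh2 : MemLp h 2 := hh.continuous.memLp_of_hasCompactSupport hsupp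
  simp only [smul_eq_mul, mul_comm (h _)]
  rw [hweak h hh2, integral_mul_expConv_eq ha hp hpc hh2 hh.continuous]

end Resolvent

/-! ### The isometry `f ↦ f' + a f` from `H¹` to `L²` -/

lemma InH1.memLp_two {f : ℝ → ℝ} (hf : InH1 f) : MemLp f 2 :=
  (memLp_two_iff_integrable_sq hf.1.continuous.aestronglyMeasurable).2 hf.2.1

lemma InH1.memLp_two_deriv {f : ℝ → ℝ} (hf : InH1 f) : MemLp (deriv f) 2 :=
  (memLp_two_iff_integrable_sq (measurable_deriv f).aestronglyMeasurable).2 hf.2.2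

lemma InH1.memLp_two_deriv_add {f : ℝ → ℝ} (hf : InH1 f) (a : ℝ) :
    MemLp (fun x => deriv f x + a * f x) 2 :=
  hf.memLp_two_deriv.add (hf.memLp_two.const_mul a)

lemma InH1.hasDerivAt_sq {f : ℝ → ℝ} (hf : InH1 f) (x : ℝ) :
    HasDerivAt (fun x => f x ^ 2) (2 * (f x * deriv f x)) x :=
  ((hf.1 x).hasDerivAt.pow 2).congr_deriv (by push_cast; ring)

lemma InH1.integrable_mul_deriv_s1 {f : ℝ → ℝ} (hf : InH1 f) :
    Integrable (fun x => f x * deriv f x) :=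
  hf.memLp_two.integrable_mul hf.memLp_two_deriv

lemma InH1.tendsto_atBot {f : ℝ → ℝ} (hf : InH1 f) : Tendsto f atBot (𝓝 0) := by
  have hsq := tendsto_zero_of_hasDerivAt_of_integrableOn_Iic (a := 0)
    (fun x _ => hf.hasDerivAt_sq x) (hf.integrable_mul_deriv_s1.const_mul 2).integrableOn
    hf.2.1.integrableOn
  rw [tendsto_zero_iff_abs_tendsto_zero]
  simpa only [Real.sqrt_sq_eq_abs, Real.sqrt_zero, Function.comp_def] using hsq.sqrt

lemma InH1.expConv_deriv_add {f : ℝ → ℝ} (hf : InH1 f) {a : ℝ} (ha : 0 < a) :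
    expConv a (fun x => deriv f x + a * f x) = f := by
  have hderiv (t : ℝ) : HasDerivAt (fun t => Real.exp (a * t) * f t)
      (Real.exp (a * t) * (deriv f t + a * f t)) t :=
    (((hasDerivAt_id t).const_mul a).exp.mul (hf.1 t).hasDerivAt).congr_deriv (by
      simp only [id]
      ring)
  have hlim : Tendsto (fun t => Real.exp (a * t) * f t) atBot (𝓝 0) := by
    have hexp : Tendsto (fun t => Real.exp (a * t)) atBot (𝓝 0) :=
      Real.tendsto_exp_atBot.comp (tendsto_id.const_mul_atBot ha)
    simpa only [mul_zero] using hexp.mul hf.tendsto_atBot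
  funext x
  rw [expConv_eq_integral_Iic, integral_Iic_of_hasDerivAt_of_tendsto' (fun t _ => hderiv t)
    (integrableOn_exp_mul ha (hf.memLp_two_deriv_add a) x) hlim, sub_zero, ← mul_assoc,
    ← Real.exp_add, neg_add_cancel, Real.exp_zero, one_mul]

lemma InH1.integrable_deriv_sq_add {f : ℝ → ℝ} (hf : InH1 f) (c : ℝ) :
    Integrable (fun x => deriv f x ^ 2 + c * f x ^ 2) :=
  hf.2.2.add (hf.2.1.const_mul c)

/-- The cross term `2 a f f' = a (f²)'` integrates to zero. -/
lemma InH1.integral_deriv_add_sq {f : ℝ → ℝ} (hf : InH1 f) (a : ℝ) :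
    ∫ x, (deriv f x + a * f x) ^ 2 = ∫ x, (deriv f x ^ 2 + a ^ 2 * f x ^ 2) := by
  have hcross : ∫ x, 2 * (f x * deriv f x) = 0 := integral_eq_zero_of_hasDerivAt_of_integrable
    hf.hasDerivAt_sq (hf.integrable_mul_deriv_s1.const_mul 2) hf.2.1
  have hexpand (x : ℝ) : (deriv f x + a * f x) ^ 2 =
      (deriv f x ^ 2 + a ^ 2 * f x ^ 2) + a * (2 * (f x * deriv f x)) := by ring
  simp only [hexpand]
  rw [integral_add (hf.integrable_deriv_sq_add _)
    ((hf.integrable_mul_deriv_s1.const_mul 2).const_mul a), integral_const_mul, hcross, mul_zero,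
    add_zero]

lemma inH1_expConv {a : ℝ} (ha : 0 < a) {p : ℝ → ℝ} (hp : MemLp p 2) (hc : Continuous p) :
    InH1 (expConv a p) := by
  have hderiv := hasDerivAt_expConv ha hp hc
  refine ⟨fun x => (hderiv x).differentiableAt, (memLp_two_expConv ha hp).integrable_sq, ?_⟩
  rw [funext fun x => (hderiv x).deriv]
  exact (hp.sub ((memLp_two_expConv ha hp).const_mul a)).integrable_sq

lemma Ifun_sq_sq {f g : ℝ → ℝ} (hf : InH1 f) (hg : InH1 g) (a b : ℝ) :
    Ifun (a ^ 2) (b ^ 2) f g =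
      (∫ x, (deriv f x + a * f x) ^ 2) + ∫ x, (deriv g x + b * g x) ^ 2 := by
  rw [hf.integral_deriv_add_sq, hg.integral_deriv_add_sq,
    ← integral_add (hf.integrable_deriv_sq_add _) (hg.integrable_deriv_sq_add _), Ifun]
  congr 1 with x
  ring

/-! ### The cubic form on `L² × L²` -/

section CubicForm

/-- The Hilbert space `L²(ℝ) × L²(ℝ)`, normed by `‖(u, v)‖² = ‖u‖² + ‖v‖²`. -/
abbrev L2Pair : Type := WithLp 2 (Lp ℝ 2 (volume : Measure ℝ) × Lp ℝ 2 (volume : Measure ℝ))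

/-- The constraint `∫ f² g` expressed through `u = f' + a f` and `v = g' + b g`. -/
def cubicForm (a b : ℝ) (w : L2Pair) : ℝ := ∫ x, expConv a w.fst x ^ 2 * expConv b w.snd x

variable {a b : ℝ} {u : Lp ℝ 2 (volume : Measure ℝ)} {w : L2Pair}

lemma expConv_coeFn_add (ha : 0 < a) (u v : Lp ℝ 2 (volume : Measure ℝ)) (x : ℝ) :
    expConv a (u + v : Lp ℝ 2 (volume : Measure ℝ)) x = expConv a u x + expConv a v x := by
  obtain ⟨e, he⟩ := exists_inner_eq_expConv ha x
  simp only [← he, inner_add_right]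

lemma expConv_coeFn_smul (a t : ℝ) (u : Lp ℝ 2 (volume : Measure ℝ)) (x : ℝ) :
    expConv a (t • u : Lp ℝ 2 (volume : Measure ℝ)) x = t * expConv a u x := by
  rw [expConv_congr_ae (Lp.coeFn_smul t u), expConv, smul_convolution, Pi.smul_apply, smul_eq_mul,
    expConv]

lemma expConv_coeFn_zero (a : ℝ) : expConv a (0 : Lp ℝ 2 (volume : Measure ℝ)) = 0 := by
  rw [expConv_congr_ae (Lp.coeFn_zero ℝ 2 volume), expConv, zero_convolution]

lemma abs_expConv_coeFn_le (ha : 0 < a) (u : Lp ℝ 2 (volume : Measure ℝ)) (x : ℝ) :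
    |expConv a u x| ≤ √(2 * a)⁻¹ * ‖u‖ := by
  refine (Real.abs_le_sqrt (expConv_sq_le ha (Lp.memLp u) x)).trans_eq ?_
  rw [← norm_L2_sq_eq_integral, Real.sqrt_mul (by positivity), Real.sqrt_sq (norm_nonneg u)]

lemma integral_expConv_coeFn_sq_le (ha : 0 < a) (u : Lp ℝ 2 (volume : Measure ℝ)) :
    ∫ x, expConv a u x ^ 2 ≤ (a⁻¹) ^ 2 * ‖u‖ ^ 2 := by
  rw [norm_L2_sq_eq_integral]
  exact integral_expConv_sq_le ha (Lp.memLp u)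

lemma memLpTwoTop_expConv_coeFn (ha : 0 < a) (u : Lp ℝ 2 (volume : Measure ℝ)) :
    MemLpTwoTop (expConv a u) volume :=
  memLpTwoTop_expConv ha (Lp.memLp u)

lemma WeaklyTendsto.tendsto_expConv_zero (ha : 0 < a) {U : ℕ → Lp ℝ 2 (volume : Measure ℝ)}
    (hU : WeaklyTendsto U 0) (x : ℝ) : Tendsto (fun n => expConv a (U n) x) atTop (𝓝 0) := by
  obtain ⟨e, he⟩ := exists_inner_eq_expConv ha x
  simpa only [he, expConv_coeFn_zero, Pi.zero_apply] using hU e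

lemma WeaklyTendsto.fst {W : ℕ → L2Pair} (hW : WeaklyTendsto W w) :
    WeaklyTendsto (fun n => (W n).fst) w.fst := fun h => by
  simpa [WithLp.prod_inner_apply] using hW (WithLp.toLp 2 (h, 0))

lemma WeaklyTendsto.snd {W : ℕ → L2Pair} (hW : WeaklyTendsto W w) :
    WeaklyTendsto (fun n => (W n).snd) w.snd := fun h => by
  simpa [WithLp.prod_inner_apply] using hW (WithLp.toLp 2 (0, h))

lemma cubicForm_smul (a b t : ℝ) (w : L2Pair) :
    cubicForm a b (t • w) = t ^ 3 * cubicForm a b w := by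
  rw [cubicForm, cubicForm, ← integral_const_mul]
  congr 1 with x
  rw [WithLp.smul_fst, WithLp.smul_snd, expConv_coeFn_smul, expConv_coeFn_smul]
  ring

lemma cubicForm_add (ha : 0 < a) (hb : 0 < b) (w z : L2Pair) :
    cubicForm a b (w + z) = ∫ x, (expConv a w.fst x + expConv a z.fst x) ^ 2
      * (expConv b w.snd x + expConv b z.snd x) := by
  simp only [cubicForm, WithLp.add_fst, WithLp.add_snd, expConv_coeFn_add ha, expConv_coeFn_add hb]

lemma WeaklyTendsto.tendsto_cubicForm_sub (ha : 0 < a) (hb : 0 < b) {W : ℕ → L2Pair} {R : ℝ}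
    (hW : WeaklyTendsto W w) (hR : ∀ n, ‖W n‖ ≤ R) :
    Tendsto (fun n => cubicForm a b (W n) - cubicForm a b (W n - w)) atTop
      (𝓝 (cubicForm a b w)) := by
  have hrem : ∀ n, ‖W n - w‖ ≤ R + ‖w‖ := fun n => (norm_sub_le _ _).trans (by gcongr; exact hR n)
  have hfst : ∀ n, ‖(W n - w).fst‖ ≤ R + ‖w‖ := fun n => (WithLp.norm_fst_le _ _).trans (hrem n)
  have hsnd : ∀ n, ‖(W n - w).snd‖ ≤ R + ‖w‖ := fun n => (WithLp.norm_snd_le _ _).trans (hrem n)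
  have hsplit := tendsto_integral_add_sq_mul_add_sub (memLpTwoTop_expConv_coeFn ha w.fst)
    (memLpTwoTop_expConv_coeFn hb w.snd) (C := √(2 * a)⁻¹ * (R + ‖w‖))
    (D := √(2 * b)⁻¹ * (R + ‖w‖)) (R := (a⁻¹) ^ 2 * (R + ‖w‖) ^ 2)
    (fun n => memLpTwoTop_expConv_coeFn ha (W n - w).fst)
    (fun n => memLpTwoTop_expConv_coeFn hb (W n - w).snd)
    (fun n x => (abs_expConv_coeFn_le ha _ x).trans (by gcongr; exact hfst n))
    (fun n x => (abs_expConv_coeFn_le hb _ x).trans (by gcongr; exact hsnd n))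
    (fun n => (integral_expConv_coeFn_sq_le ha _).trans (by gcongr; exact hfst n))
    (hW.sub_const.fst.tendsto_expConv_zero ha) (hW.sub_const.snd.tendsto_expConv_zero hb)
  simpa only [← cubicForm_add ha hb, add_sub_cancel, ← cubicForm.eq_1] using hsplit

/-- The translate `x ↦ (u (x + c), v (x + c))` of `w = (u, v)`. -/
def L2Pair.translate (c : ℝ) (w : L2Pair) : L2Pair :=
  WithLp.toLp 2 (Lp.compMeasurePreserving (· + c) (measurePreserving_add_right volume c) w.fst,
    Lp.compMeasurePreserving (· + c) (measurePreserving_add_right volume c) w.snd)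

lemma expConv_compMeasurePreserving_add (a c : ℝ) (u : Lp ℝ 2 (volume : Measure ℝ)) (x : ℝ) :
    expConv a (Lp.compMeasurePreserving (· + c) (measurePreserving_add_right volume c) u) x
      = expConv a u (x + c) := by
  rw [expConv_congr_ae (Lp.coeFn_compMeasurePreserving u _)]
  exact expConv_comp_add_right a u c x

lemma expConv_fst_translate (a c : ℝ) (w : L2Pair) (x : ℝ) :
    expConv a (w.translate c).fst x = expConv a w.fst (x + c) :=
  expConv_compMeasurePreserving_add a c w.fst x

lemma expConv_snd_translate (a c : ℝ) (w : L2Pair) (x : ℝ) :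
    expConv a (w.translate c).snd x = expConv a w.snd (x + c) :=
  expConv_compMeasurePreserving_add a c w.snd x

lemma L2Pair.norm_translate (c : ℝ) (w : L2Pair) : ‖w.translate c‖ = ‖w‖ := by
  rw [← sq_eq_sq₀ (norm_nonneg _) (norm_nonneg _), WithLp.prod_norm_sq_eq_of_L2,
    WithLp.prod_norm_sq_eq_of_L2, translate]
  simp only [WithLp.toLp_fst, WithLp.toLp_snd, Lp.norm_compMeasurePreserving]

lemma cubicForm_translate (a b c : ℝ) (w : L2Pair) :
    cubicForm a b (w.translate c) = cubicForm a b w := by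
  simp only [cubicForm, expConv_fst_translate, expConv_snd_translate]
  exact integral_add_right_eq_self (μ := volume)
    (fun x => expConv a w.fst x ^ 2 * expConv b w.snd x) c

/-- The translation moves a point at which `|g|` is comparable to `∫ f² g / ∫ f²` to the origin. -/
lemma exists_cubicForm_le_abs_inner_translate (ha : 0 < a) (hb : 0 < b) :
    ∃ e : L2Pair, ∀ w : L2Pair, ‖w‖ = 1 →
      ∃ c, cubicForm a b w ≤ |inner ℝ e (w.translate c)| := by
  obtain ⟨e, he⟩ := exists_inner_eq_expConv hb 0
  refine ⟨WithLp.toLp 2 (0, (2 * (a⁻¹) ^ 2) • e), fun w hw => ?_⟩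
  have hf := (memLpTwoTop_expConv_coeFn ha w.fst).two.integrable_sq
  obtain ⟨c, hc⟩ := exists_abs_integral_mul_le hf (fun x => sq_nonneg _) (expConv b w.snd)
  have hinner : inner ℝ (WithLp.toLp 2 (0, (2 * (a⁻¹) ^ 2) • e)) (w.translate c)
      = 2 * (a⁻¹) ^ 2 * expConv b w.snd c := by
    simp [WithLp.prod_inner_apply, inner_smul_left, he, expConv_snd_translate]
  have hmass : ∫ x, expConv a w.fst x ^ 2 ≤ (a⁻¹) ^ 2 := by
    refine (integral_expConv_coeFn_sq_le ha w.fst).trans (mul_le_of_le_one_right (sq_nonneg _) ?_)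
    exact pow_le_one₀ (norm_nonneg _) ((WithLp.norm_fst_le _ w).trans_eq hw)
  refine ⟨c, ?_⟩
  rw [hinner, abs_mul, abs_of_pos (by positivity : 0 < 2 * (a⁻¹) ^ 2)]
  calc cubicForm a b w ≤ 2 * |expConv b w.snd c| * ∫ x, expConv a w.fst x ^ 2 :=
        (le_abs_self _).trans hc
    _ ≤ 2 * |expConv b w.snd c| * (a⁻¹) ^ 2 := by gcongr
    _ = 2 * (a⁻¹) ^ 2 * |expConv b w.snd c| := by ring

lemma exists_cubicForm_pos (ha : 0 < a) (hb : 0 < b) : ∃ w, 0 < cubicForm a b w := by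
  obtain ⟨u, hu, -, hupos⟩ := exists_expConv_zero_pos ha
  obtain ⟨v, hv, hv0, hvpos⟩ := exists_expConv_zero_pos hb
  refine ⟨WithLp.toLp 2 (hu.toLp u, hv.toLp v), ?_⟩
  have hcont : Continuous fun x => expConv a u x ^ 2 * expConv b v x :=
    ((continuous_expConv ha hu).pow 2).mul (continuous_expConv hb hv)
  have hint : Integrable fun x => expConv a u x ^ 2 * expConv b v x :=
    by
    simpa only [sq, mul_assoc] using (memLpTwoTop_expConv ha hu).integrable_mul_mul
      (memLpTwoTop_expConv ha hu) (memLpTwoTop_expConv hb hv)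
  rw [cubicForm, WithLp.toLp_fst, WithLp.toLp_snd, expConv_congr_ae hu.coeFn_toLp,
    expConv_congr_ae hv.coeFn_toLp]
  exact integral_pos_of_integrable_nonneg_nonzero hcont hint
    (fun x => mul_nonneg (sq_nonneg _) (expConv_nonneg hv0 x)) (x := 0) (by positivity)

lemma exists_cubicForm_maximizer (ha : 0 < a) (hb : 0 < b) :
    ∃ w, ‖w‖ = 1 ∧ 0 < cubicForm a b w ∧ ∀ z, cubicForm a b z ≤ cubicForm a b w * ‖z‖ ^ 3 := by
  have : Fact ((2 : ENNReal) ≠ ⊤) := ⟨by norm_num⟩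
  have := UniformSpace.secondCountable_of_separable (Lp ℝ 2 (volume : Measure ℝ))
  obtain ⟨e, he⟩ := exists_cubicForm_le_abs_inner_translate ha hb
  refine exists_maximizer_of_weak_splitting (by norm_num) (fun t w _ => cubicForm_smul a b t w)
    (fun W w hW hweak => hweak.tendsto_cubicForm_sub ha hb fun n => (hW n).le) (e := e)
    (fun w hw => ?_) (exists_cubicForm_pos ha hb)
  obtain ⟨c, hc⟩ := he w hw
  exact ⟨w.translate c, (w.norm_translate c).trans hw, cubicForm_translate a b c w, hc⟩

lemma cubicForm_eulerLagrange (ha : 0 < a) (hb : 0 < b) (hw : ‖w‖ = 1)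
    (hmax : ∀ z, cubicForm a b z ≤ cubicForm a b w * ‖z‖ ^ 3)
    (h k : Lp ℝ 2 (volume : Measure ℝ)) :
    2 * (∫ x, expConv a w.fst x * (expConv b w.snd x * expConv a h x))
      + ∫ x, expConv a w.fst x * (expConv a w.fst x * expConv b k x)
      = 3 * cubicForm a b w * (inner ℝ w.fst h + inner ℝ w.snd k) := by
  have hderiv := hasDerivAt_integral_add_sq_mul_add (memLpTwoTop_expConv_coeFn ha w.fst)
    (memLpTwoTop_expConv_coeFn hb w.snd) (memLpTwoTop_expConv_coeFn ha h)
    (memLpTwoTop_expConv_coeFn hb k)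
  refine deriv_eq_of_forall_le_mul_norm_pow hw hmax (h := WithLp.toLp 2 (h, k)) ?_
  simpa only [cubicForm_add ha hb, WithLp.smul_fst, WithLp.smul_snd, WithLp.toLp_fst,
    WithLp.toLp_snd, expConv_coeFn_smul] using hderiv

lemma exists_continuous_ae_eq_of_inner_eq (ha : 0 < a) {p : ℝ → ℝ} (hp : MemLp p 2)
    (hpc : Continuous p) (hu : ∀ h : Lp ℝ 2 (volume : Measure ℝ),
      inner ℝ u h = ∫ x, p x * expConv a h x) :
    ∃ q : ℝ → ℝ, Continuous q ∧ u =ᵐ[volume] q := by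
  refine ⟨expConvAdj a p, continuous_expConvAdj ha hp,
    ae_eq_expConvAdj_of_integral_mul_eq ha (Lp.memLp u) hp hpc fun h hh => ?_⟩
  rw [← expConv_congr_ae hh.coeFn_toLp, ← hu, inner_L2_eq_integral]
  refine integral_congr_ae ?_
  filter_upwards [hh.coeFn_toLp] with x hx
  rw [hx]

lemma exists_continuous_ae_eq_of_forall_cubicForm_le (ha : 0 < a) (hb : 0 < b) (hw : ‖w‖ = 1)
    (hpos : 0 < cubicForm a b w) (hmax : ∀ z, cubicForm a b z ≤ cubicForm a b w * ‖z‖ ^ 3) :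
    (∃ p : ℝ → ℝ, Continuous p ∧ w.fst =ᵐ[volume] p) ∧
      ∃ q : ℝ → ℝ, Continuous q ∧ w.snd =ᵐ[volume] q := by
  have hf := memLpTwoTop_expConv_coeFn ha w.fst
  have hg := memLpTwoTop_expConv_coeFn hb w.snd
  have hfc := continuous_expConv ha (Lp.memLp w.fst)
  have hgc := continuous_expConv hb (Lp.memLp w.snd)
  have hEL := cubicForm_eulerLagrange ha hb hw hmax
  have hfst (h : Lp ℝ 2 (volume : Measure ℝ)) : inner ℝ w.fst h = ∫ x,
      2 / (3 * cubicForm a b w) * (expConv a w.fst x * expConv b w.snd x) * expConv a h x := by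
    have hvar := hEL h 0
    simp only [expConv_coeFn_zero, Pi.zero_apply, mul_zero, integral_zero, add_zero,
      inner_zero_right] at hvar
    simp only [mul_assoc, integral_const_mul]
    rw [div_mul_eq_mul_div, hvar]
    field_simp
  have hsnd (k : Lp ℝ 2 (volume : Measure ℝ)) : inner ℝ w.snd k = ∫ x,
      1 / (3 * cubicForm a b w) * (expConv a w.fst x * expConv a w.fst x) * expConv b k x := by
    have hvar := hEL 0 k
    simp only [expConv_coeFn_zero, Pi.zero_apply, mul_zero, integral_zero, zero_add,
      inner_zero_right] at hvar
    simp only [mul_assoc, integral_const_mul]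
    rw [hvar]
    field_simp
  exact ⟨exists_continuous_ae_eq_of_inner_eq ha ((hf.mul hg).two.const_mul _) (by fun_prop) hfst,
    exists_continuous_ae_eq_of_inner_eq hb ((hf.mul hf).two.const_mul _) (by fun_prop) hsnd⟩

lemma inH1_expConv_of_ae_eq (ha : 0 < a) {p : ℝ → ℝ} (hp : Continuous p) (hu : u =ᵐ[volume] p) :
    InH1 (expConv a u) ∧ ∫ x, (deriv (expConv a u) x + a * expConv a u x) ^ 2 = ‖u‖ ^ 2 := by
  have hp2 : MemLp p 2 := (memLp_congr_ae hu).1 (Lp.memLp u)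
  rw [expConv_congr_ae hu]
  refine ⟨inH1_expConv ha hp2 hp, ?_⟩
  rw [norm_L2_sq_eq_integral]
  refine integral_congr_ae ?_
  filter_upwards [hu] with x hx
  rw [(hasDerivAt_expConv ha hp2 hp x).deriv, hx, sub_add_cancel]

lemma exists_L2Pair_of_inH1 (ha : 0 < a) (hb : 0 < b) {f g : ℝ → ℝ} (hf : InH1 f) (hg : InH1 g) :
    ∃ w : L2Pair, cubicForm a b w = ∫ x, f x ^ 2 * g x ∧ ‖w‖ ^ 2 = Ifun (a ^ 2) (b ^ 2) f g := by
  have hu := hf.memLp_two_deriv_add a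
  have hv := hg.memLp_two_deriv_add b
  refine ⟨WithLp.toLp 2 (hu.toLp _, hv.toLp _), ?_, ?_⟩
  · rw [cubicForm, WithLp.toLp_fst, WithLp.toLp_snd, expConv_congr_ae hu.coeFn_toLp,
      expConv_congr_ae hv.coeFn_toLp, hf.expConv_deriv_add ha, hg.expConv_deriv_add hb]
  · rw [WithLp.prod_norm_sq_eq_of_L2, WithLp.toLp_fst, WithLp.toLp_snd, Ifun_sq_sq hf hg,
      norm_toLp_two_sq hu, norm_toLp_two_sq hv]

end CubicForm

/-! ### Existence of minimizers -/

lemma pow_surjective_of_odd {n : ℕ} (hn : Odd n) : Function.Surjective fun t : ℝ => t ^ n := by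
  have htop : Tendsto (fun t : ℝ => t ^ n) atTop atTop := tendsto_pow_atTop hn.pos.ne'
  refine (continuous_pow n).surjective htop ?_
  simpa only [Function.comp_def, hn.neg_pow, neg_neg] using
    tendsto_neg_atTop_atBot.comp (htop.comp tendsto_neg_atBot_atTop)

lemma abs_cubicForm_le {a b K : ℝ} (hK : ∀ z, cubicForm a b z ≤ K * ‖z‖ ^ 3) (z : L2Pair) :
    |cubicForm a b z| ≤ K * ‖z‖ ^ 3 := by
  have hneg : -cubicForm a b z = cubicForm a b ((-1 : ℝ) • z) := by
    rw [cubicForm_smul]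
    ring
  refine abs_le'.2 ⟨hK z, ?_⟩
  simpa only [hneg, neg_one_smul, norm_neg] using hK ((-1 : ℝ) • z)

lemma norm_smul_le_of_cubicForm_eq {a b t : ℝ} {w z : L2Pair} (hw : ‖w‖ = 1)
    (hpos : 0 < cubicForm a b w) (hmax : ∀ z, cubicForm a b z ≤ cubicForm a b w * ‖z‖ ^ 3)
    (hz : cubicForm a b z = cubicForm a b (t • w)) : ‖t • w‖ ≤ ‖z‖ := by
  have hcube : cubicForm a b w * |t| ^ 3 ≤ cubicForm a b w * ‖z‖ ^ 3 := by
    calc cubicForm a b w * |t| ^ 3 = |cubicForm a b z| := by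
          rw [hz, cubicForm_smul, abs_mul, abs_pow, abs_of_pos hpos, mul_comm]
      _ ≤ cubicForm a b w * ‖z‖ ^ 3 := abs_cubicForm_le hmax z
  rw [norm_smul, hw, mul_one, Real.norm_eq_abs]
  exact le_of_pow_le_pow_left₀ three_ne_zero (norm_nonneg z) (le_of_mul_le_mul_left hcube hpos)

lemma exists_inH1_of_forall_cubicForm_le {a b : ℝ} (ha : 0 < a) (hb : 0 < b) {w : L2Pair}
    (hw : ‖w‖ = 1) (hpos : 0 < cubicForm a b w)
    (hmax : ∀ z, cubicForm a b z ≤ cubicForm a b w * ‖z‖ ^ 3) (t : ℝ) :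
    ∃ f g : ℝ → ℝ, InH1 f ∧ InH1 g ∧ ∫ x, f x ^ 2 * g x = cubicForm a b (t • w) ∧
      Ifun (a ^ 2) (b ^ 2) f g = ‖t • w‖ ^ 2 := by
  obtain ⟨⟨p, hp, hup⟩, q, hq, hvq⟩ :=
    exists_continuous_ae_eq_of_forall_cubicForm_le ha hb hw hpos hmax
  obtain ⟨hf, hfI⟩ := inH1_expConv_of_ae_eq ha (hp.const_smul t)
    ((Lp.coeFn_smul t w.fst).trans (hup.const_smul t))
  obtain ⟨hg, hgI⟩ := inH1_expConv_of_ae_eq hb (hq.const_smul t)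
    ((Lp.coeFn_smul t w.snd).trans (hvq.const_smul t))
  refine ⟨_, _, hf, hg, rfl, ?_⟩
  rw [Ifun_sq_sq hf hg, hfI, hgI, WithLp.prod_norm_sq_eq_of_L2, WithLp.smul_fst, WithLp.smul_snd]

theorem minimizer_exists_general (α₀ β₀ lam : ℝ) (hα : 0 < α₀) (hβ : 0 < β₀) :
    ∃ φ ψ : ℝ → ℝ, InH1 φ ∧ InH1 ψ ∧ (∫ x : ℝ, φ x ^ 2 * ψ x) = lam ∧
      Ifun α₀ β₀ φ ψ = Mfun α₀ β₀ lam := by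
  obtain ⟨a, ha, rfl⟩ : ∃ a, 0 < a ∧ a ^ 2 = α₀ := ⟨√α₀, Real.sqrt_pos.2 hα, Real.sq_sqrt hα.le⟩
  obtain ⟨b, hb, rfl⟩ : ∃ b, 0 < b ∧ b ^ 2 = β₀ := ⟨√β₀, Real.sqrt_pos.2 hβ, Real.sq_sqrt hβ.le⟩
  obtain ⟨w, hw, hpos, hmax⟩ := exists_cubicForm_maximizer ha hb
  obtain ⟨t, ht⟩ := pow_surjective_of_odd (by decide : Odd 3) (lam / cubicForm a b w)
  have hlam : cubicForm a b (t • w) = lam := by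
    rw [cubicForm_smul, show t ^ 3 = _ from ht, div_mul_cancel₀ _ hpos.ne']
  obtain ⟨φ, ψ, hφ, hψ, hint, hI⟩ := exists_inH1_of_forall_cubicForm_le ha hb hw hpos hmax t
  have hleast : IsLeast (IvalSet (a ^ 2) (b ^ 2) lam) (Ifun (a ^ 2) (b ^ 2) φ ψ) := by
    refine ⟨⟨φ, ψ, hφ, hψ, hint.trans hlam, rfl⟩, ?_⟩
    rintro _ ⟨f, g, hf, hg, hfg, rfl⟩
    obtain ⟨z, hz, hzI⟩ := exists_L2Pair_of_inH1 ha hb hf hg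
    rw [hI, ← hzI]
    gcongr
    exact norm_smul_le_of_cubicForm_eq hw hpos hmax (hz.trans (hfg.trans hlam.symm))
  exact ⟨φ, ψ, hφ, hψ, hint.trans hlam, hleast.csInf_eq.symm⟩

/-- the set `S_λ` of minimizers is non-empty. -/
theorem minimizer_exists (α₀ β₀ lam : ℝ) (hα : 0 < α₀) (hβ : 0 < β₀) (hlam : 0 < lam) :
    ∃ φ ψ : ℝ → ℝ, InH1 φ ∧ InH1 ψ ∧ (∫ x : ℝ, φ x ^ 2 * ψ x) = lam ∧
      Ifun α₀ β₀ φ ψ = Mfun α₀ β₀ lam :=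
  minimizer_exists_general α₀ β₀ lam hα hβ
end
end
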